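/- Every finite simple graph with no K_{3,3} minor is generically 4-stress free. -/

import Mathlib

open scoped Classical

/-- `H` is a minor of `G`: there is a family of pairwise disjoint nonempty connected
"branch sets" in `G`, one for each vertex of `H`, such that every edge of `H` is
realized by an edge of `G` between the corresponding branch sets. -/
def HasMinor {V W : Type*} (G : SimpleGraph V) (H : SimpleGraph W) : Prop :=
  ∃ B : W → Set V,
    (∀ i, (B i).Nonempty) ∧
    (∀ i j, i ≠ j → Disjoint (B i) (B j)) ∧
    (∀ i, (G.induce (B i)).Connected) ∧
    (∀ i j, H.Adj i j → ∃ x ∈ B i, ∃ y ∈ B j, G.Adj x y)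

/-- `w : E(G) → ℝ` is a stress of the embedding `f : V → ℝ^d`. -/
noncomputable def IsStress {V : Type*} [Fintype V] (G : SimpleGraph V) (d : ℕ)
    (f : V → EuclideanSpace ℝ (Fin d)) (w : G.edgeSet → ℝ) : Prop :=
  ∀ v : V,
    (∑ u : V, if h : G.Adj v u then w ⟨s(v, u), G.mem_edgeSet.mpr h⟩ • (f v - f u) else 0) = 0

/-- The set of `d`-embeddings of `G` whose only stress is the zero function. -/
def StressFreeEmbeddings {V : Type*} [Fintype V] (G : SimpleGraph V) (d : ℕ) :
    Set (V → EuclideanSpace ℝ (Fin d)) :=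
  {f | ∀ w : G.edgeSet → ℝ, IsStress G d f w → w = 0}

/-- `G` is generically `d`-stress free: the set of `d`-embeddings with no nonzero
stress is open and dense in the space of all `d`-embeddings. -/
def GenericallyStressFree {V : Type*} [Fintype V] (G : SimpleGraph V) (d : ℕ) : Prop :=
  IsOpen (StressFreeEmbeddings G d) ∧ Dense (StressFreeEmbeddings G d)


/-- A directions-based version of stress freeness. -/
def SFree {V : Type*} [Fintype V] (G : SimpleGraph V) {d : ℕ}
    (D : V → V → EuclideanSpace ℝ (Fin d)) : Prop :=
  ∀ W : V → V → ℝ, (∀ x y, W x y = W y x) → (∀ x y, ¬ G.Adj x y → W x y = 0) →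
    (∀ v, ∑ u, W v u • D v u = 0) → ∀ x y, W x y = 0

/-- Row of the rigidity matrix. -/
noncomputable def rrow {V : Type*} [Fintype V] (G : SimpleGraph V) {d : ℕ}
    (D : V → V → EuclideanSpace ℝ (Fin d)) (e : G.edgeSet) : V → EuclideanSpace ℝ (Fin d) :=
  fun v => ∑ u, if s(v, u) = e.1 then D v u else 0

lemma rrow_sum {V : Type*} [Fintype V] (G : SimpleGraph V) {d : ℕ}
    (D : V → V → EuclideanSpace ℝ (Fin d)) (w : G.edgeSet → ℝ) (v : V) :
    (∑ e, w e • rrow G D e) v =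
      ∑ u, if h : G.Adj v u then w ⟨s(v, u), G.mem_edgeSet.mpr h⟩ • D v u else 0 := by
  simp only [Finset.sum_apply, Pi.smul_apply, rrow, Finset.smul_sum]
  rw [Finset.sum_comm]
  refine Finset.sum_congr rfl fun u _ => ?_
  split_ifs with h
  · rw [Finset.sum_eq_single ⟨s(v, u), G.mem_edgeSet.mpr h⟩]
    · simp
    · intro b _ hb
      rw [if_neg, smul_zero]
      intro h2
      exact hb (Subtype.ext h2.symm)
    · simp
  · refine Finset.sum_eq_zero fun e _ => ?_
    rw [if_neg, smul_zero]
    intro h2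
    exact h (G.mem_edgeSet.mp (h2 ▸ e.2))

lemma free_iff {V : Type*} [Fintype V] (G : SimpleGraph V) {d : ℕ}
    (D : V → V → EuclideanSpace ℝ (Fin d)) :
    (∀ w : G.edgeSet → ℝ, (∀ v, (∑ u, if h : G.Adj v u then
        w ⟨s(v, u), G.mem_edgeSet.mpr h⟩ • D v u else 0) = 0) → w = 0) ↔ SFree G D := by
  constructor
  · intro H W hs h0 hW x y
    by_cases hxy : G.Adj x y
    swap
    · exact h0 x y hxy
    let w : G.edgeSet → ℝ := fun e => Sym2.lift ⟨W, hs⟩ e.1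
    have := H w (by
      intro v
      refine Eq.trans ?_ (hW v)
      refine Finset.sum_congr rfl fun u _ => ?_
      split_ifs with h
      · simp [w]
      · rw [h0 v u h, zero_smul])
    have h2 := congrFun this ⟨s(x, y), G.mem_edgeSet.mpr hxy⟩
    simpa [w] using h2
  · intro H w hw
    have := H (fun x y => if h : G.Adj x y then w ⟨s(x, y), G.mem_edgeSet.mpr h⟩ else 0)
      (by
        intro x y
        by_cases h : G.Adj x y
        · simp only [h, h.symm, dite_true]
          congr 2
          exact Sym2.eq_swap
        · have h' : ¬ G.Adj y x := fun h' => h h'.symm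
          simp [h, h'])
      (by intro x y h; simp [h])
      (by
        intro v
        rw [← hw v]
        refine Finset.sum_congr rfl fun u _ => ?_
        split_ifs <;> simp)
    funext ⟨e, he⟩
    induction e using Sym2.ind with
    | _ x y =>
      have h2 := this x y
      rw [dif_pos (G.mem_edgeSet.mp he)] at h2
      exact h2

lemma sfree_iff_li {V : Type*} [Fintype V] (G : SimpleGraph V) {d : ℕ}
    (D : V → V → EuclideanSpace ℝ (Fin d)) :
    SFree G D ↔ LinearIndependent ℝ (rrow G D) := by
  rw [← free_iff, Fintype.linearIndependent_iff]
  refine forall_congr' fun w => ?_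
  simp only [← rrow_sum, funext_iff, Pi.zero_apply]

lemma mem_sfe_iff {V : Type*} [Fintype V] (G : SimpleGraph V) (d : ℕ)
    (f : V → EuclideanSpace ℝ (Fin d)) :
    f ∈ StressFreeEmbeddings G d ↔ SFree G (fun x y => f x - f y) := by
  rw [← free_iff]
  rfl

lemma continuous_rrow {V : Type*} [Fintype V] (G : SimpleGraph V) {d : ℕ} :
    Continuous (fun D : V → V → EuclideanSpace ℝ (Fin d) => rrow G D) := by
  unfold rrow
  refine continuous_pi fun e => continuous_pi fun v => continuous_finsetSum _ fun u _ => ?_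
  split_ifs
  · fun_prop
  · fun_prop

lemma isOpen_sfree {V : Type*} [Fintype V] (G : SimpleGraph V) {d : ℕ} :
    IsOpen {D : V → V → EuclideanSpace ℝ (Fin d) | SFree G D} := by
  simp only [sfree_iff_li]
  exact isOpen_setOfPred_linearIndependent.preimage (continuous_rrow G)

lemma dense_li {F E ι : Type*} [AddCommGroup F] [Module ℝ F] [TopologicalSpace F]
    [ContinuousAdd F] [ContinuousSMul ℝ F] [AddCommGroup E] [Module ℝ E] [Fintype ι]
    (Φ : F →ₗ[ℝ] (ι → E)) (x0 : F) (h0 : LinearIndependent ℝ (Φ x0)) :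
    Dense {x | LinearIndependent ℝ (Φ x)} := by
  intro x
  obtain ⟨L, hL⟩ := (Fintype.linearCombination ℝ (Φ x0)).exists_leftInverse_of_injective
    (LinearMap.ker_eq_bot.mpr h0.fintypeLinearCombination_injective)
  let A : Matrix ι ι ℝ := fun i => L (Φ x i)
  let B : Matrix ι ι ℝ := fun i => L (Φ (x0 - x) i)
  let P : Polynomial ℝ := Matrix.det (A.map Polynomial.C + (Polynomial.X : Polynomial ℝ) • B.map Polynomial.C)
  have hP : ∀ t, P.eval t = (A + t • B).det := by
    intro t
    rw [← Polynomial.coe_evalRingHom, RingHom.map_det]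
    congr 1
    ext i j
    simp [mul_comm t]
  have hAB : ∀ t : ℝ, (A + t • B) = fun i => L (Φ (x + t • (x0 - x)) i) := by
    intro t
    ext i j
    rw [Matrix.add_apply, Matrix.smul_apply]
    simp only [A, B, map_add, map_smul, Pi.add_apply, Pi.smul_apply]
  have hP1 : P.eval 1 = 1 := by
    rw [hP, hAB]
    have : (fun i => L (Φ (x + (1:ℝ) • (x0 - x)) i)) = (1 : Matrix ι ι ℝ) := by
      funext i
      have h1 := LinearMap.congr_fun hL (Pi.single i 1)
      simp at h1
      simp only [one_smul, add_sub_cancel]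
      rw [h1]
      funext j
      simp [Matrix.one_apply, Pi.single_apply, eq_comm]
    rw [this, Matrix.det_one]
  have hPne : P ≠ 0 := by
    intro h
    simp [h] at hP1
  have hfin : ({t | P.eval t = 0} : Set ℝ).Finite := Polynomial.finite_setOfPred_isRoot hPne
  have hd : Dense ({t | P.eval t = 0} : Set ℝ)ᶜ := hfin.countable.dense_compl ℝ
  have hc : Continuous (fun t : ℝ => x + t • (x0 - x)) := by fun_prop
  have := image_closure_subset_closure_image hc ⟨0, hd 0, rfl⟩
  simp only [zero_smul, add_zero] at this
  refine closure_mono ?_ this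
  rintro _ ⟨t, ht, rfl⟩
  have hdet : (A + t • B).det ≠ 0 := by
    rw [← hP]; exact ht
  have hli := Matrix.linearIndependent_rows_of_det_ne_zero hdet
  rw [hAB] at hli
  exact LinearIndependent.of_comp L hli

/-- The linear map sending an embedding to the rows. -/
noncomputable def rrowLin {V : Type*} [Fintype V] (G : SimpleGraph V) (d : ℕ) :
    (V → EuclideanSpace ℝ (Fin d)) →ₗ[ℝ] (G.edgeSet → V → EuclideanSpace ℝ (Fin d)) where
  toFun f := rrow G (fun x y => f x - f y)
  map_add' f g := by
    funext e v
    simp only [rrow, Pi.add_apply, ← Finset.sum_add_distrib]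
    refine Finset.sum_congr rfl fun u _ => ?_
    split_ifs
    · abel
    · simp
  map_smul' c f := by
    funext e v
    simp only [rrow, Pi.smul_apply, Finset.smul_sum, RingHom.id_apply]
    refine Finset.sum_congr rfl fun u _ => ?_
    split_ifs
    · rw [smul_sub]
    · simp

lemma isOpen_sfe {V : Type*} [Fintype V] (G : SimpleGraph V) (d : ℕ) :
    IsOpen (StressFreeEmbeddings G d) := by
  have : StressFreeEmbeddings G d = (fun (f : V → EuclideanSpace ℝ (Fin d)) => fun x y => f x - f y) ⁻¹'
      {D | SFree G D} := by
    ext f; exact mem_sfe_iff G d f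
  rw [this]
  exact (isOpen_sfree G).preimage (by fun_prop)

lemma dense_sfe {V : Type*} [Fintype V] (G : SimpleGraph V) (d : ℕ)
    (h : (StressFreeEmbeddings G d).Nonempty) : Dense (StressFreeEmbeddings G d) := by
  obtain ⟨f, hf⟩ := h
  rw [mem_sfe_iff, sfree_iff_li] at hf
  have := dense_li (rrowLin G d) f hf
  convert this using 1
  ext g
  rw [mem_sfe_iff, sfree_iff_li]
  rfl

/-- Contraction of `v` into `u`, with `v` kept as an isolated vertex. -/
def contr {V : Type*} (G : SimpleGraph V) (u v : V) : SimpleGraph V where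
  Adj x y := x ≠ v ∧ y ≠ v ∧ x ≠ y ∧ (G.Adj x y ∨ (x = u ∧ G.Adj v y) ∨ (y = u ∧ G.Adj x v))
  symm := ⟨by
    rintro x y ⟨h1, h2, h3, h4⟩
    refine ⟨h2, h1, h3.symm, ?_⟩
    rcases h4 with h | ⟨h, h'⟩ | ⟨h, h'⟩
    · exact Or.inl h.symm
    · exact Or.inr (Or.inr ⟨h, h'.symm⟩)
    · exact Or.inr (Or.inl ⟨h, h'.symm⟩)⟩
  loopless := ⟨fun x h => h.2.2.1 rfl⟩

lemma split_limit {V : Type*} [Fintype V] (G : SimpleGraph V) {u v : V} (huv : G.Adj u v)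
    (f : V → EuclideanSpace ℝ (Fin 4)) (hf : SFree (contr G u v) (fun x y => f x - f y))
    (d : EuclideanSpace ℝ (Fin 4))
    (hd : ∀ (a : V → ℝ) (s : ℝ), (∀ c, ¬ (G.Adj u c ∧ G.Adj v c) → a c = 0) →
      (∑ c, a c • (f u - f c)) + s • d = 0 → s = 0 ∧ ∀ c, a c = 0)
    (f' : V → EuclideanSpace ℝ (Fin 4)) (hf' : ∀ x, f' x = if x = v then f u else f x) :
    SFree G (fun x y => if x = u ∧ y = v then -d else if x = v ∧ y = u then d
      else f' x - f' y) := by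
  intro W hs h0 hW
  have hne : u ≠ v := huv.ne
  have hloop : ∀ x, W x x = 0 := fun x => h0 x x (G.loopless.irrefl x)
  let W' : V → V → ℝ := fun x y => if x = v ∨ y = v ∨ x = y then 0 else
    W x y + (if x = u then W v y else 0) + (if y = u then W x v else 0)
  have hW' : ∀ x y, W' x y = 0 := by
    apply hf W'
    · intro x y
      simp only [W']
      by_cases h : x = v ∨ y = v ∨ x = y
      · rw [if_pos h, if_pos (by tauto)]
      · have h' : ¬ (y = v ∨ x = v ∨ y = x) := by tauto
        rw [if_neg h, if_neg h', hs x y, hs v y, hs x v]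
        ring
    · intro x y hxy
      simp only [W']
      by_cases h : x = v ∨ y = v ∨ x = y
      · rw [if_pos h]
      · rw [if_neg h]
        push Not at h
        have h3 : ¬ (G.Adj x y ∨ (x = u ∧ G.Adj v y) ∨ (y = u ∧ G.Adj x v)) :=
          fun h4 => hxy ⟨h.1, h.2.1, h.2.2, h4⟩
        push Not at h3
        rw [h0 x y h3.1]
        have e1 : (if x = u then W v y else 0) = 0 := by
          split_ifs with h5
          · exact h0 _ _ (h3.2.1 h5)
          · rfl
        have e2 : (if y = u then W x v else 0) = 0 := by
          split_ifs with h5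
          · exact h0 _ _ (h3.2.2 h5)
          · rfl
        rw [e1, e2]; simp
    · intro x
      by_cases hxv : x = v
      · simp [W', hxv]
      by_cases hxu : x = u
      · subst hxu
        have key : ∀ y, W' x y • (f x - f y) =
            W x y • (if x = x ∧ y = v then -d else if x = v ∧ y = x then d else f' x - f' y)
            + W v y • (if v = x ∧ y = v then -d else if v = v ∧ y = x then d else f' v - f' y)
            + (if y = v then W x v • d else 0) - (if y = x then W x v • d else 0) := by
          intro y
          by_cases h1 : y = v
          · subst h1
            simp [W', hloop, hne, hne.symm]
          · by_cases h2 : y = x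
            · subst h2
              simp [W', hloop, hne, hne.symm, hs v y]
            · simp [W', h1, h2, Ne.symm h1, hne, hne.symm, hf', Ne.symm h2, add_smul]
        rw [Finset.sum_congr rfl fun y _ => key y, Finset.sum_sub_distrib, Finset.sum_add_distrib,
          Finset.sum_add_distrib, hW x, hW v]
        simp
      · have key : ∀ y, W' x y • (f x - f y) =
            W x y • (if x = u ∧ y = v then -d else if x = v ∧ y = u then d else f' x - f' y)
            + (if y = u then W x v • (f x - f u) else 0)
            - (if y = v then W x v • (f x - f u) else 0) := by
          intro y
          by_cases h1 : y = v
          · subst h1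
            simp [W', hne.symm, hxv, hxu, hf']
          · by_cases h2 : y = u
            · subst h2
              simp [W', hne, hxv, hxu, hf', add_smul]
            · by_cases h3 : x = y
              · subst h3
                simp [W', h1, h2]
              · simp [W', h1, h2, h3, hxv, hxu, hf']
        rw [Finset.sum_congr rfl fun y _ => key y, Finset.sum_sub_distrib, Finset.sum_add_distrib,
          hW x]
        simp
  have hrest : ∀ x y, x ≠ u → x ≠ v → y ≠ u → y ≠ v → W x y = 0 := by
    intro x y h1 h2 h3 h4
    by_cases h5 : x = y
    · rw [h5, hloop]
    · have := hW' x y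
      simpa [W', h1, h2, h3, h4, h5] using this
  have hsum : ∀ y, y ≠ u → y ≠ v → W u y + W v y = 0 := by
    intro y h1 h2
    have := hW' u y
    simpa [W', h1, h2, Ne.symm h1, hne] using this
  have hv := hW v
  have key : ∀ y, W v y • (if v = u ∧ y = v then -d else if v = v ∧ y = u then d else f' v - f' y)
      = (if y = u then 0 else W v y) • (f u - f y) + (if y = u then W v u • d else 0) := by
    intro y
    by_cases h1 : y = u
    · subst h1; simp [hne.symm]
    · by_cases h2 : y = v
      · subst h2; simp [hloop, hne.symm]
      · simp [h1, h2, hne.symm, hf']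
  rw [Finset.sum_congr rfl fun y _ => key y, Finset.sum_add_distrib, Finset.sum_ite_eq'] at hv
  simp only [Finset.mem_univ, if_true] at hv
  obtain ⟨hvu, ha⟩ := hd (fun y => if y = u then 0 else W v y) (W v u) (by
    intro c hc
    by_cases h1 : c = u
    · simp [h1]
    · simp only [h1, if_false]
      by_cases h2 : c = v
      · rw [h2, hloop]
      · by_cases h3 : G.Adj v c
        · have h4 := hsum c h1 h2
          rw [h0 u c (fun h5 => hc ⟨h5, h3⟩)] at h4
          linarith
        · exact h0 _ _ h3) hv
  have hvy : ∀ y, W v y = 0 := by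
    intro y
    by_cases h1 : y = u
    · rw [h1, hvu]
    · have := ha y
      simpa [h1] using this
  have huy : ∀ y, W u y = 0 := by
    intro y
    by_cases h1 : y = u
    · rw [h1, hloop]
    · by_cases h2 : y = v
      · rw [h2, hs, hvu]
      · have := hsum y h1 h2
        rw [hvy y] at this
        linarith
  intro x y
  by_cases h1 : x = u
  · rw [h1, huy]
  by_cases h2 : x = v
  · rw [h2, hvy]
  by_cases h3 : y = u
  · rw [hs, h3, huy]
  by_cases h4 : y = v
  · rw [hs, h4, hvy]
  exact hrest x y h1 h2 h3 h4

lemma split_perturb {V : Type*} [Fintype V] (G : SimpleGraph V) {u v : V} (huv : G.Adj u v)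
    (f : V → EuclideanSpace ℝ (Fin 4)) (d : EuclideanSpace ℝ (Fin 4))
    (h : SFree G (fun x y => if x = u ∧ y = v then -d else if x = v ∧ y = u then d
      else (if x = v then f u else f x) - (if y = v then f u else f y))) :
    ∃ g : V → EuclideanSpace ℝ (Fin 4), SFree G (fun x y => g x - g y) := by
  have hne : u ≠ v := huv.ne
  let g : ℝ → V → EuclideanSpace ℝ (Fin 4) := fun t x => if x = v then f u + t • d else f x
  let D : ℝ → V → V → EuclideanSpace ℝ (Fin 4) := fun t x y =>
    if x = u ∧ y = v then -d else if x = v ∧ y = u then d else g t x - g t y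
  have hg : ∀ x, Continuous (fun t => g t x) := by
    intro x
    simp only [g]
    split_ifs <;> fun_prop
  have hD : Continuous D := by
    refine continuous_pi fun x => continuous_pi fun y => ?_
    simp only [D]
    split_ifs
    · fun_prop
    · fun_prop
    · exact (hg x).sub (hg y)
  have hopen : IsOpen {t | SFree G (D t)} := (isOpen_sfree G).preimage hD
  have h0 : (0 : ℝ) ∈ {t | SFree G (D t)} := by
    simpa [D, g] using h
  have hdense : Dense ({0}ᶜ : Set ℝ) := dense_compl_singleton 0
  obtain ⟨t, ht, ht0⟩ := hdense.inter_open_nonempty _ hopen ⟨0, h0⟩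
  have ht0 : t ≠ 0 := ht0
  refine ⟨g t, ?_⟩
  intro W hs hz hW
  let W' : V → V → ℝ := fun x y => if (x = u ∧ y = v) ∨ (x = v ∧ y = u) then t * W x y else W x y
  have := ht W' (by
    intro x y
    simp only [W']
    rw [hs x y]
    congr 1
    apply propext
    tauto) (by
    intro x y hxy
    simp [W', hz x y hxy]) (by
    intro x
    rw [← hW x]
    refine Finset.sum_congr rfl fun y _ => ?_
    by_cases h1 : x = u ∧ y = v
    · obtain ⟨rfl, rfl⟩ := h1
      simp [W', D, g, hne, mul_smul, smul_comm t]
    · by_cases h2 : x = v ∧ y = u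
      · obtain ⟨rfl, rfl⟩ := h2
        simp [W', D, g, hne, hne.symm, mul_smul, smul_comm t]
      · simp only [W', D, h1, h2, or_self, if_false])
  intro x y
  have h3 := this x y
  simp only [W'] at h3
  split_ifs at h3 with h4
  · exact (mul_eq_zero.mp h3).resolve_left ht0
  · exact h3

lemma split_main {V : Type*} [Fintype V] (G : SimpleGraph V) {u v : V} (huv : G.Adj u v)
    (hc : (Finset.univ.filter fun c => G.Adj u c ∧ G.Adj v c).card ≤ 3)
    (h : (StressFreeEmbeddings (contr G u v) 4).Nonempty) :
    (StressFreeEmbeddings G 4).Nonempty := by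
  set C := Finset.univ.filter fun c => G.Adj u c ∧ G.Adj v c with hC
  have hcard : Fintype.card C ≤ Fintype.card (Fin 4) := by simp; omega
  obtain ⟨em⟩ := Function.Embedding.nonempty_of_card_le hcard
  let Φ : (V → EuclideanSpace ℝ (Fin 4)) →ₗ[ℝ] (C → EuclideanSpace ℝ (Fin 4)) :=
    { toFun := fun f c => f u - f c
      map_add' := by intro f g; funext c; simp only [Pi.add_apply]; abel
      map_smul' := by intro r f; funext c; simp [smul_sub] }
  have hu : u ∉ C := by simp [hC]
  have hd0 : Dense {f | LinearIndependent ℝ (Φ f)} := by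
    apply dense_li Φ (fun x => if hx : x ∈ C then
      - EuclideanSpace.basisFun (Fin 4) ℝ (em ⟨x, hx⟩) else 0)
    have h1 := (EuclideanSpace.basisFun (Fin 4) ℝ).orthonormal.linearIndependent.comp em em.injective
    have h2 : Φ (fun x => if hx : x ∈ C then
        - EuclideanSpace.basisFun (Fin 4) ℝ (em ⟨x, hx⟩) else 0) =
        EuclideanSpace.basisFun (Fin 4) ℝ ∘ em := by
      funext c
      simp [Φ, hu]
    rw [h2]
    exact h1
  obtain ⟨f, hf, hli⟩ := hd0.inter_open_nonempty _ (isOpen_sfe (contr G u v) 4) h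
  rw [mem_sfe_iff] at hf
  have hli : LinearIndependent ℝ (fun c : C => f u - f c) := hli
  have hspan : Submodule.span ℝ (Set.range (fun c : C => f u - f c)) ≠ ⊤ := by
    intro h1
    have h2 := finrank_range_le_card (R := ℝ) (fun c : C => f u - f c)
    rw [Set.finrank, h1, finrank_top, finrank_euclideanSpace] at h2
    simp at h2
    omega
  obtain ⟨d, hd⟩ : ∃ d, d ∉ Submodule.span ℝ (Set.range (fun c : C => f u - f c)) := by
    by_contra h1
    push Not at h1
    exact hspan (eq_top_iff.mpr fun x _ => h1 x)
  have hlim := split_limit G huv f hf d (by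
    intro a s ha hsum
    have hconv : ∑ c, a c • (f u - f c) = ∑ c : C, a c • (f u - f c) := by
      rw [Finset.sum_coe_sort C (fun c => a c • (f u - f c))]
      symm
      apply Finset.sum_subset (Finset.subset_univ _)
      intro c _ hcC
      rw [ha c (by simpa [hC] using hcC), zero_smul]
    rw [hconv] at hsum
    have hs0 : s = 0 := by
      by_contra hs
      apply hd
      have h1 : s • d ∈ Submodule.span ℝ (Set.range (fun c : C => f u - f c)) := by
        rw [eq_neg_of_add_eq_zero_right hsum]
        apply Submodule.neg_mem
        apply Submodule.sum_mem
        intro c _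
        exact Submodule.smul_mem _ _ (Submodule.subset_span ⟨c, rfl⟩)
      exact (Submodule.smul_mem_iff _ hs).mp h1
    refine ⟨hs0, fun c => ?_⟩
    rw [hs0, zero_smul, add_zero] at hsum
    by_cases hcC : c ∈ C
    · exact Fintype.linearIndependent_iff.mp hli (fun c => a c) hsum ⟨c, hcC⟩
    · exact ha c (by simpa [hC] using hcC)) (fun x => if x = v then f u else f x) (fun x => rfl)
  obtain ⟨g, hg⟩ := split_perturb G huv f d hlim
  exact ⟨g, (mem_sfe_iff G 4 g).mpr hg⟩

lemma minor_of_contr {V W : Type*} {G : SimpleGraph V} {u v : V} (huv : G.Adj u v)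
    {H : SimpleGraph W} (hH : ∀ i, ∃ j, H.Adj i j) (h : HasMinor (contr G u v) H) :
    HasMinor G H := by
  obtain ⟨B, -, hdis, hcon, hadj⟩ := h
  have hne : u ≠ v := huv.ne
  let π : V → V := fun x => if x = v then u else x
  have hπ : ∀ x, x ≠ v → π x = x := fun x hx => by simp [π, hx]
  have hπv : π v = u := by simp [π]
  refine ⟨fun i => π ⁻¹' B i, ?_, ?_, ?_, ?_⟩
  · intro i
    obtain ⟨j, hj⟩ := hH i
    obtain ⟨x, hx, y, hy, hxy⟩ := hadj i j hj
    exact ⟨x, by simpa [hπ x hxy.1] using hx⟩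
  · intro i j hij
    exact (hdis i j hij).preimage π
  · intro i
    have hfib : ∀ (x y : V) (hx : π x ∈ B i) (hy : π y ∈ B i), π x = π y →
        (G.induce (π ⁻¹' B i)).Reachable ⟨x, hx⟩ ⟨y, hy⟩ := by
      intro x y hx hy hxy
      by_cases h1 : x = y
      · subst h1; rfl
      · apply SimpleGraph.Adj.reachable
        simp only [SimpleGraph.comap_adj, Function.Embedding.subtype_apply]
        by_cases h2 : x = v
        · subst h2
          rw [hπv, hπ y (Ne.symm h1)] at hxy
          subst hxy
          exact huv.symm
        · by_cases h3 : y = v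
          · subst h3
            rw [hπv, hπ x h2] at hxy
            subst hxy
            exact huv
          · rw [hπ x h2, hπ y h3] at hxy
            exact absurd hxy h1
    have hstep : ∀ (x y : V) (hx : π x ∈ B i) (hy : π y ∈ B i), (contr G u v).Adj (π x) (π y) →
        (G.induce (π ⁻¹' B i)).Reachable ⟨x, hx⟩ ⟨y, hy⟩ := by
      intro x y hx hy ⟨h1, h2, h3, h4⟩
      have base : ∀ (x' y' : V) (hx' : π x' ∈ B i) (hy' : π y' ∈ B i), π x' = π x → π y' = π y →
          G.Adj x' y' → (G.induce (π ⁻¹' B i)).Reachable ⟨x, hx⟩ ⟨y, hy⟩ := by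
        intro x' y' hx' hy' e1 e2 ha
        refine (hfib x x' hx hx' e1.symm).trans (SimpleGraph.Reachable.trans ?_ (hfib y' y hy' hy e2))
        apply SimpleGraph.Adj.reachable
        simpa using ha
      have ex : π (π x) = π x := hπ _ h1
      have ey : π (π y) = π y := hπ _ h2
      rcases h4 with h | ⟨h, h'⟩ | ⟨h, h'⟩
      · exact base (π x) (π y) (ex.symm ▸ hx) (ey.symm ▸ hy) ex ey h
      · exact base v (π y) (by rw [hπv, ← h]; exact hx) (ey.symm ▸ hy) (by rw [hπv, h]) ey h'
      · exact base (π x) v (ex.symm ▸ hx) (by rw [hπv, ← h]; exact hy) ex (by rw [hπv, h]) h'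
    have hwalk : ∀ (a b : B i), ((contr G u v).induce (B i)).Walk a b →
        ∀ (x y : V) (hx : π x ∈ B i) (hy : π y ∈ B i), π x = a → π y = b →
        (G.induce (π ⁻¹' B i)).Reachable ⟨x, hx⟩ ⟨y, hy⟩ := by
      intro a b p
      induction p with
      | nil =>
        intro x y hx hy e1 e2
        exact hfib x y hx hy (e1.trans e2.symm)
      | @cons a c b hac p ih =>
        intro x y hx hy e1 e2
        have hac' : (contr G u v).Adj a c := by simpa using hac
        have ec : π c = c := hπ _ hac'.2.1
        have hc : π c ∈ B i := by rw [ec]; exact c.2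
        exact (hstep x c hx hc (by rw [e1, ec]; exact hac')).trans (ih c y hc hy ec e2)
    obtain ⟨j, hj⟩ := hH i
    obtain ⟨x, hx, y, hy, hxy⟩ := hadj i j hj
    have : Nonempty (π ⁻¹' B i) := ⟨⟨x, by simpa [hπ x hxy.1] using hx⟩⟩
    refine { preconnected := ?_ }
    rintro ⟨x, hx⟩ ⟨y, hy⟩
    obtain ⟨p⟩ := (hcon i).preconnected ⟨π x, hx⟩ ⟨π y, hy⟩
    exact hwalk _ _ p x y hx hy rfl rfl
  · intro i j hij
    obtain ⟨x, hx, y, hy, h1, h2, h3, h4⟩ := hadj i j hij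
    have hx' : π x ∈ B i := by rw [hπ x h1]; exact hx
    have hy' : π y ∈ B j := by rw [hπ y h2]; exact hy
    rcases h4 with h | ⟨h, h'⟩ | ⟨h, h'⟩
    · exact ⟨x, hx', y, hy', h⟩
    · exact ⟨v, by simpa [hπv, ← h] using hx, y, hy', h'⟩
    · exact ⟨x, hx', v, by simpa [hπv, ← h] using hy, h'⟩

lemma minor_of_sets {V : Type*} {G : SimpleGraph V} {z : V} {X Y P Q R : Set V}
    (hN : ∀ S ∈ ({X, Y, P, Q, R} : Set (Set V)), (G.induce S).Connected ∧ ∀ x ∈ S, G.Adj z x)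
    (hXY : Disjoint X Y) (hPQ : Disjoint P Q) (hPR : Disjoint P R) (hQR : Disjoint Q R)
    (hXd : Disjoint X P ∧ Disjoint X Q ∧ Disjoint X R)
    (hYd : Disjoint Y P ∧ Disjoint Y Q ∧ Disjoint Y R)
    (hX : ∀ S ∈ ({P, Q, R} : Set (Set V)), ∃ x ∈ X, ∃ y ∈ S, G.Adj x y)
    (hY : ∀ S ∈ ({P, Q, R} : Set (Set V)), ∃ x ∈ Y, ∃ y ∈ S, G.Adj x y) :
    HasMinor G (completeBipartiteGraph (Fin 3) (Fin 3)) := by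
  simp only [Set.mem_insert_iff, Set.mem_singleton_iff, forall_eq_or_imp, forall_eq] at hN hX hY
  obtain ⟨⟨cX, nX⟩, ⟨cY, nY⟩, ⟨cP, nP⟩, ⟨cQ, nQ⟩, ⟨cR, nR⟩⟩ := hN
  have ne : ∀ S : Set V, (G.induce S).Connected → S.Nonempty := fun S h =>
    Set.nonempty_coe_sort.mp h.nonempty
  have hz : ∀ S : Set V, (∀ x ∈ S, G.Adj z x) → Disjoint {z} S := by
    intro S h
    rw [Set.disjoint_singleton_left]
    intro hz
    exact G.loopless.irrefl z (h z hz)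
  have hzP : ∀ S : Set V, (G.induce S).Connected → (∀ x ∈ S, G.Adj z x) →
      ∃ x ∈ ({z} : Set V), ∃ y ∈ S, G.Adj x y := by
    intro S h1 h2
    obtain ⟨y, hy⟩ := ne S h1
    exact ⟨z, rfl, y, hy, h2 y hy⟩
  have cz : (G.induce ({z} : Set V)).Connected := by
    have : Nonempty ({z} : Set V) := ⟨⟨z, rfl⟩⟩
    refine { preconnected := ?_ }
    rintro ⟨x, hx⟩ ⟨y, hy⟩
    obtain rfl : x = z := hx
    obtain rfl : y = x := hy
    rfl
  have hA : ∀ i j : Fin 3, ∃ x ∈ (![{z}, X, Y] : Fin 3 → Set V) i,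
      ∃ y ∈ (![P, Q, R] : Fin 3 → Set V) j, G.Adj x y := by
    intro i j
    fin_cases i <;> fin_cases j
    · exact hzP P cP nP
    · exact hzP Q cQ nQ
    · exact hzP R cR nR
    · exact hX.1
    · exact hX.2.1
    · exact hX.2.2
    · exact hY.1
    · exact hY.2.1
    · exact hY.2.2
  have hcon : ∀ i, (G.induce (Sum.elim (![{z}, X, Y] : Fin 3 → Set V) ![P, Q, R] i)).Connected := by
    rintro (i | i) <;> fin_cases i
    exacts [cz, cX, cY, cP, cQ, cR]
  have hAB : ∀ i j : Fin 3, Disjoint ((![{z}, X, Y] : Fin 3 → Set V) i)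
      ((![P, Q, R] : Fin 3 → Set V) j) := by
    intro i j
    fin_cases i <;> fin_cases j
    exacts [hz _ nP, hz _ nQ, hz _ nR, hXd.1, hXd.2.1, hXd.2.2, hYd.1, hYd.2.1, hYd.2.2]
  refine ⟨Sum.elim ![{z}, X, Y] ![P, Q, R], fun i => ne _ (hcon i), ?_, hcon, ?_⟩
  · rintro (i | i) (j | j) hij
    · fin_cases i <;> fin_cases j
      exacts [absurd rfl hij, hz _ nX, hz _ nY, (hz _ nX).symm, absurd rfl hij, hXY,
        (hz _ nY).symm, hXY.symm, absurd rfl hij]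
    · exact hAB i j
    · exact (hAB j i).symm
    · fin_cases i <;> fin_cases j
      exacts [absurd rfl hij, hPQ, hPR, hPQ.symm, absurd rfl hij, hQR,
        hPR.symm, hQR.symm, absurd rfl hij]
  · rintro (i | i) (j | j) hij
    · simp at hij
    · exact hA i j
    · obtain ⟨x, hx, y, hy, h⟩ := hA j i
      exact ⟨y, hy, x, hx, h.symm⟩
    · simp at hij

/-- `p 0, …, p k` is a path inside the neighbourhood of `z`. -/
structure IsP {V : Type*} (G : SimpleGraph V) (z : V) (p : ℕ → V) (k : ℕ) : Prop where
  nb : ∀ i ≤ k, G.Adj z (p i)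
  inj : ∀ i ≤ k, ∀ j ≤ k, p i = p j → i = j
  adj : ∀ i < k, G.Adj (p i) (p (i + 1))

lemma IsP.conn {V : Type*} {G : SimpleGraph V} {z : V} {p : ℕ → V} {k : ℕ} (h : IsP G z p k)
    {l r : ℕ} (hlr : l ≤ r) (hr : r ≤ k) :
    (G.induce (p '' Set.Icc l r)).Connected ∧ ∀ x ∈ p '' Set.Icc l r, G.Adj z x := by
  constructor
  swap
  · rintro _ ⟨i, hi, rfl⟩
    exact h.nb i (hi.2.trans hr)
  have key : ∀ n (hn : l + n ≤ r), (G.induce (p '' Set.Icc l r)).Reachable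
      ⟨p l, ⟨l, ⟨le_rfl, hlr⟩, rfl⟩⟩ ⟨p (l + n), ⟨l + n, ⟨by omega, hn⟩, rfl⟩⟩ := by
    intro n
    induction n with
    | zero => intro hn; rfl
    | succ n ih =>
      intro hn
      refine (ih (by omega)).trans (SimpleGraph.Adj.reachable ?_)
      exact h.adj (l + n) (by omega)
  have : Nonempty (p '' Set.Icc l r) := ⟨⟨p l, ⟨l, ⟨le_rfl, hlr⟩, rfl⟩⟩⟩
  refine { preconnected := ?_ }
  rintro ⟨_, i, hi, rfl⟩ ⟨_, j, hj, rfl⟩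
  obtain ⟨m, rfl⟩ := Nat.exists_eq_add_of_le hi.1
  obtain ⟨n, rfl⟩ := Nat.exists_eq_add_of_le hj.1
  exact (key m hi.2).symm.trans (key n hj.2)

lemma IsP.disj {V : Type*} {G : SimpleGraph V} {z : V} {p : ℕ → V} {k : ℕ} (h : IsP G z p k)
    {l r l' r' : ℕ} (hr : r ≤ k) (hr' : r' ≤ k) (hh : r < l' ∨ r' < l) :
    Disjoint (p '' Set.Icc l r) (p '' Set.Icc l' r') := by
  rw [Set.disjoint_left]
  rintro _ ⟨i, hi, rfl⟩ ⟨j, hj, e⟩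
  have := h.inj j (hj.2.trans hr') i (hi.2.trans hr) e
  have h1 := hi.1
  have h2 := hi.2
  have h3 := hj.1
  have h4 := hj.2
  omega

lemma minor_of_intervals {V : Type*} {G : SimpleGraph V} {z : V} {p : ℕ → V} {k : ℕ}
    (h : IsP G z p k) (l r : Fin 5 → ℕ) (hlr : ∀ i, l i ≤ r i) (hr : ∀ i, r i ≤ k)
    (hd : ∀ i j, i < j → r i < l j ∨ r j < l i)
    (hX : ∀ j : Fin 5, 2 ≤ j → ∃ x ∈ Set.Icc (l 0) (r 0), ∃ y ∈ Set.Icc (l j) (r j), G.Adj (p x) (p y))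
    (hY : ∀ j : Fin 5, 2 ≤ j → ∃ x ∈ Set.Icc (l 1) (r 1), ∃ y ∈ Set.Icc (l j) (r j), G.Adj (p x) (p y)) :
    HasMinor G (completeBipartiteGraph (Fin 3) (Fin 3)) := by
  let S : Fin 5 → Set V := fun i => p '' Set.Icc (l i) (r i)
  have hS : ∀ i, (G.induce (S i)).Connected ∧ ∀ x ∈ S i, G.Adj z x := fun i => h.conn (hlr i) (hr i)
  have hD : ∀ i j, i < j → Disjoint (S i) (S j) := fun i j hij => h.disj (hr i) (hr j) (hd i j hij)
  have hX' : ∀ j : Fin 5, 2 ≤ j → ∃ x ∈ S 0, ∃ y ∈ S j, G.Adj x y := by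
    intro j hj
    obtain ⟨x, hx, y, hy, hxy⟩ := hX j hj
    exact ⟨p x, ⟨x, hx, rfl⟩, p y, ⟨y, hy, rfl⟩, hxy⟩
  have hY' : ∀ j : Fin 5, 2 ≤ j → ∃ x ∈ S 1, ∃ y ∈ S j, G.Adj x y := by
    intro j hj
    obtain ⟨x, hx, y, hy, hxy⟩ := hY j hj
    exact ⟨p x, ⟨x, hx, rfl⟩, p y, ⟨y, hy, rfl⟩, hxy⟩
  apply minor_of_sets (z := z) (X := S 0) (Y := S 1) (P := S 2) (Q := S 3) (R := S 4)
  · simp only [Set.mem_insert_iff, Set.mem_singleton_iff, forall_eq_or_imp, forall_eq]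
    exact ⟨hS 0, hS 1, hS 2, hS 3, hS 4⟩
  · exact hD 0 1 (by decide)
  · exact hD 2 3 (by decide)
  · exact hD 2 4 (by decide)
  · exact hD 3 4 (by decide)
  · exact ⟨hD 0 2 (by decide), hD 0 3 (by decide), hD 0 4 (by decide)⟩
  · exact ⟨hD 1 2 (by decide), hD 1 3 (by decide), hD 1 4 (by decide)⟩
  · simp only [Set.mem_insert_iff, Set.mem_singleton_iff, forall_eq_or_imp, forall_eq]
    exact ⟨hX' 2 (by decide), hX' 3 (by decide), hX' 4 (by decide)⟩
  · simp only [Set.mem_insert_iff, Set.mem_singleton_iff, forall_eq_or_imp, forall_eq]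
    exact ⟨hY' 2 (by decide), hY' 3 (by decide), hY' 4 (by decide)⟩

lemma minor_case1 {V : Type*} {G : SimpleGraph V} {z : V} {p : ℕ → V} {k : ℕ}
    (h : IsP G z p k) {a j c : ℕ} (ha : 2 ≤ a) (haj : a < j) (hjc : j < c) (hc : c ≤ k)
    (h0a : G.Adj (p 0) (p a)) (h0c : G.Adj (p 0) (p c)) (hj : G.Adj (p (a - 1)) (p j)) :
    HasMinor G (completeBipartiteGraph (Fin 3) (Fin 3)) := by
  apply minor_of_intervals h ![0, a + 1, 1, a, c] ![0, c - 1, a - 1, a, c]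
  · intro i; fin_cases i <;> simp <;> omega
  · intro i; fin_cases i <;> simp <;> omega
  · intro i j hij; fin_cases i <;> fin_cases j <;> simp at hij ⊢ <;> omega
  · intro i hi
    fin_cases i <;> simp at hi ⊢
    · exact ⟨1, ⟨by omega, by omega⟩, h.adj 0 (by omega)⟩
    · exact h0a
    · exact h0c
  · intro i hi
    fin_cases i <;> simp at hi ⊢
    · exact ⟨j, ⟨by omega, by omega⟩, a - 1, ⟨by omega, by omega⟩, hj.symm⟩
    · exact ⟨a + 1, ⟨by omega, by omega⟩, (h.adj a (by omega)).symm⟩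
    · refine ⟨c - 1, ⟨by omega, by omega⟩, ?_⟩
      have := h.adj (c - 1) (by omega)
      rwa [Nat.sub_add_cancel (by omega)] at this

lemma minor_case2 {V : Type*} {G : SimpleGraph V} {z : V} {p : ℕ → V} {k : ℕ}
    (h : IsP G z p k) {a b j : ℕ} (ha : 2 ≤ a) (hab : a < b) (hbj : b < j) (hjk : j ≤ k)
    (h0a : G.Adj (p 0) (p a)) (h0b : G.Adj (p 0) (p b)) (hj : G.Adj (p (a - 1)) (p j)) :
    HasMinor G (completeBipartiteGraph (Fin 3) (Fin 3)) := by
  apply minor_of_intervals h ![1, a + 1, 0, a, b + 1] ![a - 1, b, 0, a, j]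
  · intro i; fin_cases i <;> simp <;> omega
  · intro i; fin_cases i <;> simp <;> omega
  · intro i j hij; fin_cases i <;> fin_cases j <;> simp at hij ⊢ <;> omega
  · intro i hi
    fin_cases i <;> simp at hi ⊢
    · exact ⟨1, ⟨by omega, by omega⟩, (h.adj 0 (by omega)).symm⟩
    · refine ⟨a - 1, ⟨by omega, by omega⟩, ?_⟩
      have := h.adj (a - 1) (by omega)
      rwa [Nat.sub_add_cancel (by omega)] at this
    · exact ⟨a - 1, ⟨by omega, by omega⟩, j, ⟨by omega, by omega⟩, hj⟩
  · intro i hi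
    fin_cases i <;> simp at hi ⊢
    · exact ⟨b, ⟨by omega, by omega⟩, h0b.symm⟩
    · exact ⟨a + 1, ⟨by omega, by omega⟩, (h.adj a (by omega)).symm⟩
    · exact ⟨b, ⟨by omega, by omega⟩, b + 1, ⟨by omega, by omega⟩, h.adj b (by omega)⟩

lemma IsP.rotate {V : Type*} {G : SimpleGraph V} {z : V} {p : ℕ → V} {k : ℕ}
    (h : IsP G z p k) {a : ℕ} (ha : 2 ≤ a) (hak : a ≤ k) (h0a : G.Adj (p 0) (p a)) :
    IsP G z (fun i => if i < a then p (a - 1 - i) else p i) k := by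
  refine ⟨?_, ?_, ?_⟩
  · intro i hi
    split_ifs
    · exact h.nb _ (by omega)
    · exact h.nb _ hi
  · intro i hi j hj e
    split_ifs at e
    · have := h.inj _ (by omega) _ (by omega) e
      omega
    · have := h.inj _ (by omega) _ (by omega) e
      omega
    · have := h.inj _ (by omega) _ (by omega) e
      omega
    · exact h.inj _ (by omega) _ (by omega) e
  · intro i hi
    split_ifs
    · have := h.adj (a - 1 - (i + 1)) (by omega)
      rw [show a - 1 - (i + 1) + 1 = a - 1 - i by omega] at this
      exact this.symm
    · rw [show a - 1 - i = 0 by omega, show i + 1 = a by omega]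
      exact h0a
    · omega
    · exact h.adj i hi

lemma path_nbrs {V : Type*} [Fintype V] {G : SimpleGraph V} {z : V} {k : ℕ}
    (hmax : ∀ p, ¬ IsP G z p (k + 1))
    (hdeg : ∀ x, G.Adj z x → 4 ≤ (Finset.univ.filter fun c => G.Adj z c ∧ G.Adj x c).card)
    {p : ℕ → V} (h : IsP G z p k) :
    4 ≤ ((Finset.Icc 1 k).filter fun j => G.Adj (p 0) (p j)).card := by
  refine (hdeg (p 0) (h.nb 0 (Nat.zero_le _))).trans ?_
  refine (Finset.card_le_card (t := ((Finset.Icc 1 k).filter fun j => G.Adj (p 0) (p j)).image p) ?_).trans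
    Finset.card_image_le
  intro x hx
  simp only [Finset.mem_filter, Finset.mem_univ, true_and] at hx
  simp only [Finset.mem_image, Finset.mem_filter, Finset.mem_Icc]
  by_contra hcon
  push Not at hcon
  have hout : ∀ i ≤ k, p i ≠ x := by
    intro i hi e
    rcases Nat.eq_zero_or_pos i with rfl | hpos
    · rw [e] at hx
      exact G.loopless.irrefl _ hx.2
    · exact hcon i ⟨⟨hpos, hi⟩, by rw [e]; exact hx.2⟩ e
  apply hmax (fun i => if i = 0 then x else p (i - 1))
  refine ⟨?_, ?_, ?_⟩
  · intro i hi
    split_ifs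
    · exact hx.1
    · exact h.nb _ (by omega)
  · intro i hi j hj e
    split_ifs at e
    · omega
    · exact absurd e.symm (hout _ (by omega))
    · exact absurd e (hout _ (by omega))
    · have := h.inj _ (by omega) _ (by omega) e
      omega
  · intro i hi
    rw [if_neg (Nat.succ_ne_zero i)]
    split_ifs with h0
    · subst h0
      exact hx.2.symm
    · have := h.adj (i - 1) (by omega)
      rw [Nat.sub_add_cancel (by omega)] at this
      simpa using this

lemma exists_not_mem_pair {s : Finset ℕ} (hs : 4 ≤ s.card) (a b c : ℕ) :
    ∃ x ∈ s, x ≠ a ∧ x ≠ b ∧ x ≠ c := by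
  by_contra hcon
  push Not at hcon
  have : s ⊆ {a, b, c} := by
    intro x hx
    have := hcon x hx
    simp only [Finset.mem_insert, Finset.mem_singleton]
    tauto
  have h1 := Finset.card_le_card this
  have h2 := Finset.card_le_three (a := a) (b := b) (c := c)
  omega

lemma minor_of_path {V : Type*} [Fintype V] {G : SimpleGraph V} {z : V} {k : ℕ}
    (hmax : ∀ p, ¬ IsP G z p (k + 1))
    (hdeg : ∀ x, G.Adj z x → 4 ≤ (Finset.univ.filter fun c => G.Adj z c ∧ G.Adj x c).card) :
    ∀ a, ∀ p, IsP G z p k → 2 ≤ a → a ≤ k → G.Adj (p 0) (p a) →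
    HasMinor G (completeBipartiteGraph (Fin 3) (Fin 3)) := by
  intro a
  induction a using Nat.strong_induction_on with
  | _ a ih =>
    intro p h ha hak h0a
    by_cases hsm : ∃ a', 2 ≤ a' ∧ a' < a ∧ G.Adj (p 0) (p a')
    · obtain ⟨a', h1, h2, h3⟩ := hsm
      exact ih a' h2 p h h1 (by omega) h3
    push Not at hsm
    have hJ := path_nbrs hmax hdeg h
    obtain ⟨b, hb, hb1, hba, -⟩ := exists_not_mem_pair hJ 1 a a
    obtain ⟨c, hc, hc1, hca, hcb⟩ := exists_not_mem_pair hJ 1 a b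
    simp only [Finset.mem_filter, Finset.mem_Icc] at hb hc
    have hab : a < b := by
      by_contra hlt
      exact hsm b (by omega) (by omega) hb.2
    have hac : a < c := by
      by_contra hlt
      exact hsm c (by omega) (by omega) hc.2
    have hq := h.rotate ha hak h0a
    have hJq := path_nbrs hmax hdeg hq
    obtain ⟨j, hj, hj1, hja, -⟩ := exists_not_mem_pair hJq 1 a a
    simp only [Finset.mem_filter, Finset.mem_Icc] at hj
    by_cases hlt : j < a
    · exact ih j hlt _ hq (by omega) (by omega) hj.2
    have hadj := hj.2
    rw [if_pos (by omega), if_neg hlt, Nat.sub_zero] at hadj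
    by_cases h1 : b < j
    · exact minor_case2 h ha hab h1 hj.1.2 h0a hb.2 hadj
    by_cases h2 : c < j
    · exact minor_case2 h ha hac h2 hj.1.2 h0a hc.2 hadj
    by_cases h3 : j < b
    · exact minor_case1 h ha (by omega) h3 hb.1.2 h0a hb.2 hadj
    · exact minor_case1 h ha (by omega) (by omega) hc.1.2 h0a hc.2 hadj

lemma minor_of_dense {V : Type*} [Fintype V] {G : SimpleGraph V} {z x : V} (hzx : G.Adj z x)
    (hdeg : ∀ x, G.Adj z x → 4 ≤ (Finset.univ.filter fun c => G.Adj z c ∧ G.Adj x c).card) :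
    HasMinor G (completeBipartiteGraph (Fin 3) (Fin 3)) := by
  have hbound : ∀ k p, IsP G z p k → k ≤ Fintype.card V := by
    intro k p h
    have := Finset.card_le_card_of_injOn (s := Finset.range (k + 1)) (t := Finset.univ) p
      (by intro i _; simp) (by
        intro i hi j hj e
        simp at hi hj
        exact h.inj i (by omega) j (by omega) e)
    simp at this
    omega
  have hex : ∃ k, ∃ p, IsP G z p k := ⟨0, fun _ => x, fun _ _ => hzx, by intros; omega, by intros; omega⟩
  have hmx := Nat.findGreatest_spec (P := fun k => ∃ p, IsP G z p k) (n := Fintype.card V) (m := 0)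
    (Nat.zero_le _) ⟨fun _ => x, fun _ _ => hzx, by intros; omega, by intros; omega⟩
  set k := Nat.findGreatest (fun k => ∃ p, IsP G z p k) (Fintype.card V) with hk
  have hmax : ∀ p, ¬ IsP G z p (k + 1) := by
    intro p h
    have := Nat.le_findGreatest (P := fun k => ∃ p, IsP G z p k) (hbound _ p h) ⟨p, h⟩
    omega
  obtain ⟨p, hp⟩ := hmx
  obtain ⟨a, ha, ha1, -, -⟩ := exists_not_mem_pair (path_nbrs hmax hdeg hp) 1 1 1
  simp only [Finset.mem_filter, Finset.mem_Icc] at ha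
  exact minor_of_path hmax hdeg a p hp (by omega) ha.1.2 ha.2

lemma nonempty_of_minorFree {V : Type*} [Fintype V] : ∀ (n : ℕ) (G : SimpleGraph V),
    (Finset.univ.filter fun x => ∃ y, G.Adj x y).card ≤ n →
    ¬ HasMinor G (completeBipartiteGraph (Fin 3) (Fin 3)) →
    (StressFreeEmbeddings G 4).Nonempty := by
  intro n
  induction n with
  | zero =>
    intro G hn _
    refine ⟨0, (mem_sfe_iff G 4 0).mpr ?_⟩
    intro W _ h0 _ x y
    apply h0
    intro hxy
    have : x ∈ (Finset.univ.filter fun x => ∃ y, G.Adj x y) := by simpa using ⟨y, hxy⟩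
    have := Finset.card_pos.mpr ⟨x, this⟩
    omega
  | succ n ih =>
    intro G hn hfree
    by_cases hE : ∃ u v, G.Adj u v ∧ (Finset.univ.filter fun c => G.Adj u c ∧ G.Adj v c).card ≤ 3
    · obtain ⟨u, v, huv, hc⟩ := hE
      apply split_main G huv hc
      apply ih
      · have hss : (Finset.univ.filter fun x => ∃ y, (contr G u v).Adj x y) ⊂
            (Finset.univ.filter fun x => ∃ y, G.Adj x y) := by
          rw [Finset.ssubset_iff_of_subset]
          · refine ⟨v, by simpa using ⟨u, huv.symm⟩, ?_⟩
            simp only [Finset.mem_filter, Finset.mem_univ, true_and]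
            rintro ⟨y, hy⟩
            exact hy.1 rfl
          · intro x
            simp only [Finset.mem_filter, Finset.mem_univ, true_and]
            rintro ⟨y, -, -, -, h | ⟨h, h'⟩ | ⟨h, h'⟩⟩
            · exact ⟨y, h⟩
            · exact ⟨v, h ▸ huv⟩
            · exact ⟨v, h'⟩
        have := Finset.card_lt_card hss
        omega
      · intro hm
        apply hfree
        apply minor_of_contr huv _ hm
        rintro (i | i)
        · exact ⟨Sum.inr 0, by simp⟩
        · exact ⟨Sum.inl 0, by simp⟩
    · push Not at hE
      by_cases h2 : ∃ u v, G.Adj u v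
      · obtain ⟨u, v, huv⟩ := h2
        exact absurd (minor_of_dense huv fun x hx => hE u x hx) hfree
      · push Not at h2
        refine ⟨0, (mem_sfe_iff G 4 0).mpr ?_⟩
        intro W _ h0 _ x y
        exact h0 x y (h2 x y)

/-- Every finite simple graph with no `K_{3,3}` minor is generically `4`-stress free. -/
theorem k33MinorFree_genericallyFourStressFree {V : Type*} [Fintype V] (G : SimpleGraph V)
    (hfree : ¬ HasMinor G (completeBipartiteGraph (Fin 3) (Fin 3))) :
    GenericallyStressFree G 4 :=
  ⟨isOpen_sfe G 4, dense_sfe G 4 (nonempty_of_minorFree _ G le_rfl hfree)⟩
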